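/- arXiv:2310.09889 — 7 statements merged into one kernel-verified Lean document; each statement's English description precedes it below -/
import Mathlib

section
/- For every S-element subset V of [K] and every k ∈ [K] \ V, letting n denote the number of elements of V that are smaller than k, the identity a_V = Σ_{i=n+1}^{S} (−1)^{i−n−1} · a_{(V \ {V(i)}) ∪ {k}} + Σ_{i=1}^{n} (−1)^{n+i} · a_{(V \ {V(i)}) ∪ {k}} holds. -/
/-- The `i`-th smallest element (1-indexed) of a finite set of naturals,
i.e. `V(i)` for a finite set `V` of integers. -/
def nthSmallest (V : Finset ℕ) (i : ℕ) : ℕ :=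
  (V.sort (· ≤ ·)).getD (i - 1) 0

/-- The number of elements of `V` smaller than `v`. -/
def rankIn (V : Finset ℕ) (v : ℕ) : ℕ := (V.filter (· < v)).card

lemma rankIn_lt_card {V : Finset ℕ} {v : ℕ} (hv : v ∈ V) : rankIn V v < V.card :=
  Finset.card_lt_card (Finset.filter_ssubset.2 ⟨v, hv, lt_irrefl v⟩)

lemma rankIn_strictMonoOn (V : Finset ℕ) : StrictMonoOn (rankIn V) V := by
  intro v hv w _ hvw
  refine Finset.card_lt_card (Finset.ssubset_iff_of_subset ?_ |>.2 ⟨v, ?_, ?_⟩)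
  · intro x hx
    simp only [Finset.mem_filter] at hx ⊢
    exact ⟨hx.1, hx.2.trans hvw⟩
  · simpa using ⟨hv, hvw⟩
  · simp

lemma rankIn_insert_of_lt {V : Finset ℕ} {k v : ℕ} (hk : k ∉ V) (hkv : k < v) :
    rankIn (insert k V) v = rankIn V v + 1 := by
  rw [rankIn, Finset.filter_insert, if_pos hkv, Finset.card_insert_of_notMem (by simp [hk]), rankIn]

lemma rankIn_insert_of_le {V : Finset ℕ} {k v : ℕ} (hvk : v ≤ k) :
    rankIn (insert k V) v = rankIn V v := by
  rw [rankIn, Finset.filter_insert, if_neg hvk.not_gt, rankIn]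

lemma rankIn_eq_erase_add_one {W : Finset ℕ} {k v : ℕ} (hk : k ∈ W) (hkv : k < v) :
    rankIn W v = rankIn (W.erase k) v + 1 := by
  rw [← rankIn_insert_of_lt (Finset.notMem_erase k W) hkv, Finset.insert_erase hk]

lemma rankIn_erase_of_le {W : Finset ℕ} {k v : ℕ} (hk : k ∈ W) (hvk : v ≤ k) :
    rankIn (W.erase k) v = rankIn W v := by
  rw [← rankIn_insert_of_le (V := W.erase k) hvk, Finset.insert_erase hk]

lemma rankIn_orderEmbOfFin (V : Finset ℕ) (j : Fin V.card) :
    rankIn V (V.orderEmbOfFin rfl j) = j := by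
  have hfilter : V.filter (· < V.orderEmbOfFin rfl j) =
      (Finset.Iio j).map (V.orderEmbOfFin rfl).toEmbedding := by
    ext x
    simp only [Finset.mem_filter, Finset.mem_map, Finset.mem_Iio]
    constructor
    · rintro ⟨hx, hlt⟩
      obtain ⟨i, rfl⟩ : x ∈ Set.range (V.orderEmbOfFin rfl) := by simpa using hx
      exact ⟨i, by simpa using hlt, rfl⟩
    · rintro ⟨i, hi, rfl⟩
      exact ⟨Finset.orderEmbOfFin_mem V rfl i, by simpa using hi⟩
  rw [rankIn, hfilter, Finset.card_map, Fin.card_Iio]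

lemma nthSmallest_add_one (V : Finset ℕ) (j : Fin V.card) :
    nthSmallest V (j + 1) = V.orderEmbOfFin rfl j := by
  simp [nthSmallest, Finset.orderEmbOfFin_apply]

/-- Summation over positions in the increasing enumeration is summation over elements. -/
lemma sum_Icc_nthSmallest {M : Type*} [AddCommMonoid M] (V : Finset ℕ) (f : ℕ → ℕ → M) :
    ∑ i ∈ Finset.Icc 1 V.card, f i (nthSmallest V i) = ∑ v ∈ V, f (rankIn V v + 1) v := by
  have hnth : ∀ i ∈ Finset.Icc 1 V.card,
      nthSmallest V i ∈ V ∧ rankIn V (nthSmallest V i) + 1 = i := by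
    intro i hi
    rw [Finset.mem_Icc] at hi
    obtain ⟨j, rfl⟩ : ∃ j : Fin V.card, (j : ℕ) + 1 = i := ⟨⟨i - 1, by omega⟩, by simp; omega⟩
    rw [nthSmallest_add_one, rankIn_orderEmbOfFin]
    exact ⟨Finset.orderEmbOfFin_mem V rfl j, rfl⟩
  have hrank : ∀ v ∈ V, rankIn V v + 1 ∈ Finset.Icc 1 V.card := fun v hv =>
    Finset.mem_Icc.2 ⟨by omega, rankIn_lt_card hv⟩
  refine Finset.sum_bij' (fun i _ => nthSmallest V i) (fun v _ => rankIn V v + 1)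
    (fun i hi => (hnth i hi).1) hrank (fun i hi => (hnth i hi).2) ?_ ?_
  · intro v hv
    have h := hnth _ (hrank v hv)
    exact (rankIn_strictMonoOn V).injOn h.1 hv (by omega)
  · intro i hi
    rw [(hnth i hi).2]

/-- The alternating sum of the values of `a` at the facets of `W`. -/
def alternatingFacetSum (F : Type*) [Field F] {M : Type*} [AddCommGroup M] [Module F M]
    (a : Finset ℕ → M) (W : Finset ℕ) : M :=
  ∑ w ∈ W, ((-1 : F) ^ rankIn W w) • a (W.erase w)

section

variable {F : Type*} [Field F] {M : Type*} [AddCommGroup M] [Module F M]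

lemma alternatingFacetSum_insert (a : Finset ℕ → M) {V : Finset ℕ} {k : ℕ} (hk : k ∉ V) :
    alternatingFacetSum F a (insert k V) = ((-1 : F) ^ rankIn V k) • a V +
      ∑ v ∈ V, ((-1 : F) ^ rankIn (insert k V) v) • a (insert k (V.erase v)) := by
  rw [alternatingFacetSum, Finset.sum_insert hk, rankIn_insert_of_le le_rfl,
    Finset.erase_insert hk]
  congr 1
  refine Finset.sum_congr rfl fun v hv => ?_
  rw [Finset.erase_insert_of_ne]
  rintro rfl
  exact hk hv

/-- The square of the alternating facet operator vanishes. -/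
lemma sum_sum_erase_erase_eq_zero (b : Finset ℕ → M) (W : Finset ℕ) :
    ∑ w ∈ W, ((-1 : F) ^ rankIn W w) •
      ∑ v ∈ W.erase w, ((-1 : F) ^ rankIn (W.erase w) v) • b ((W.erase w).erase v) = 0 := by
  have hcancel : ∀ v ∈ W, ∀ w ∈ W, v < w →
      ((-1 : F) ^ rankIn W w) • ((-1 : F) ^ rankIn (W.erase w) v) • b ((W.erase w).erase v) +
      ((-1 : F) ^ rankIn W v) • ((-1 : F) ^ rankIn (W.erase v) w) • b ((W.erase v).erase w)
        = 0 := by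
    intro v hv w hw hvw
    rw [rankIn_erase_of_le hw hvw.le, rankIn_eq_erase_add_one hv hvw,
      Finset.erase_right_comm (a := v), smul_smul, smul_smul, ← add_smul]
    convert zero_smul F _
    ring
  simp_rw [Finset.smul_sum]
  rw [Finset.sum_sigma']
  refine Finset.sum_involution (fun p _ => ⟨p.2, p.1⟩) ?_ ?_ ?_ ?_
  · rintro ⟨w, v⟩ hp
    simp only [Finset.mem_sigma, Finset.mem_erase] at hp
    obtain ⟨hw, hne, hv⟩ := hp
    rcases lt_or_gt_of_ne hne with h | h
    · exact hcancel v hv w hw h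
    · rw [add_comm]
      exact hcancel w hw v hv h
  · rintro ⟨w, v⟩ hp _ heq
    simp only [Finset.mem_sigma, Finset.mem_erase] at hp
    exact hp.2.1 (congrArg Sigma.fst heq)
  · rintro ⟨w, v⟩ hp
    simp only [Finset.mem_sigma, Finset.mem_erase] at hp ⊢
    exact ⟨hp.2.2, hp.2.1.symm, hp.1⟩
  · rintro ⟨w, v⟩ _
    rfl

/-- If `a` on sets avoiding `1` is determined by the sets containing `1`, then `a` is a cocycle. -/
lemma alternatingFacetSum_eq_zero {K S : ℕ} {a : Finset ℕ → M}
    (ha : ∀ V : Finset ℕ, V ⊆ Finset.Icc 2 K → V.card = S →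
      a V = ∑ v ∈ V, ((-1 : F) ^ rankIn V v) • a (insert 1 (V.erase v)))
    {W : Finset ℕ} (hW : W ⊆ Finset.Icc 1 K) (hcard : W.card = S + 1) :
    alternatingFacetSum F a W = 0 := by
  by_cases h1 : 1 ∈ W
  · obtain ⟨V, hV, rfl⟩ : ∃ V, 1 ∉ V ∧ insert 1 V = W :=
      ⟨W.erase 1, Finset.notMem_erase 1 W, Finset.insert_erase h1⟩
    have hgt : ∀ v ∈ V, 1 < v := fun v hv =>
      lt_of_le_of_ne (Finset.mem_Icc.1 (hW (Finset.mem_insert_of_mem hv))).1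
        (by rintro rfl; exact hV hv)
    have hrank : rankIn V 1 = 0 := by
      rw [rankIn, Finset.card_eq_zero, Finset.filter_eq_empty_iff]
      exact fun v hv => (hgt v hv).not_gt
    rw [Finset.card_insert_of_notMem hV, Nat.add_right_cancel_iff] at hcard
    rw [alternatingFacetSum_insert a hV, hrank, pow_zero, one_smul, ha V ?_ hcard,
      ← Finset.sum_add_distrib]
    · refine Finset.sum_eq_zero fun v hv => ?_
      rw [rankIn_insert_of_lt hV (hgt v hv), pow_succ, mul_neg_one, neg_smul, add_neg_cancel]
    · exact fun v hv => Finset.mem_Icc.2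
        ⟨hgt v hv, (Finset.mem_Icc.1 (hW (Finset.mem_insert_of_mem hv))).2⟩
  · rw [← sum_sum_erase_erase_eq_zero (F := F) (fun U => a (insert 1 U)) W]
    refine Finset.sum_congr rfl fun w hw => ?_
    rw [ha (W.erase w) ?_ (by rw [Finset.card_erase_of_mem hw, hcard, Nat.add_sub_cancel])]
    intro v hv
    have hvW := Finset.mem_of_mem_erase hv
    have hv1 : v ≠ 1 := by rintro rfl; exact h1 hvW
    have := Finset.mem_Icc.1 (hW hvW)
    exact Finset.mem_Icc.2 ⟨by omega, this.2⟩

end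

/-- Lemma 1 (crucial transform): for every `S`-element subset `V` of `[K]` and every
`k ∈ [K] \ V`, writing `n` for the number of elements of `V` smaller than `k`,
`a_V = Σ_{i=n+1}^{S} (−1)^{i−n−1} a_{(V\{V(i)})∪{k}} + Σ_{i=1}^{n} (−1)^{n+i} a_{(V\{V(i)})∪{k}}`. -/
theorem crucial_transform
    (K S : ℕ) (hS : 2 ≤ S) (hSK : S ≤ K)
    (F : Type*) [Field F] (M : Type*) [AddCommGroup M] [Module F M]
    (a : Finset ℕ → M)
    (ha : ∀ V : Finset ℕ, V ⊆ Finset.Icc 2 K → V.card = S →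
      a V = ∑ i ∈ Finset.Icc 1 S,
        ((-1 : F) ^ (i - 1)) • a (insert 1 (V.erase (nthSmallest V i))))
    (V : Finset ℕ) (hV : V ⊆ Finset.Icc 1 K) (hVcard : V.card = S)
    (k : ℕ) (hk : k ∈ Finset.Icc 1 K) (hkV : k ∉ V) :
    a V =
      (∑ i ∈ Finset.Icc ((V.filter (· < k)).card + 1) S,
        ((-1 : F) ^ (i - (V.filter (· < k)).card - 1)) •
          a (insert k (V.erase (nthSmallest V i)))) +
      (∑ i ∈ Finset.Icc 1 (V.filter (· < k)).card,
        ((-1 : F) ^ ((V.filter (· < k)).card + i)) •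
          a (insert k (V.erase (nthSmallest V i)))) := by
  have hcocycle : alternatingFacetSum F a (insert k V) = 0 := by
    refine alternatingFacetSum_eq_zero (K := K) (S := S) ?_ (Finset.insert_subset hk hV)
      (by rw [Finset.card_insert_of_notMem hkV, hVcard])
    rintro U hU rfl
    rw [ha U hU rfl, sum_Icc_nthSmallest U
      (fun i v => ((-1 : F) ^ (i - 1)) • a (insert 1 (U.erase v)))]
    simp
  rw [alternatingFacetSum_insert a hkV] at hcocycle
  change a V = (∑ i ∈ Finset.Icc (rankIn V k + 1) S, ((-1 : F) ^ (i - rankIn V k - 1)) •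
      a (insert k (V.erase (nthSmallest V i)))) +
    ∑ i ∈ Finset.Icc 1 (rankIn V k), ((-1 : F) ^ (rankIn V k + i)) •
      a (insert k (V.erase (nthSmallest V i)))
  have hn : rankIn V k ≤ S := hVcard ▸ Finset.card_filter_le V _
  set n := rankIn V k
  have hsplit : (∑ i ∈ Finset.Icc (n + 1) S, ((-1 : F) ^ (i - n - 1)) •
        a (insert k (V.erase (nthSmallest V i)))) +
      ∑ i ∈ Finset.Icc 1 n, ((-1 : F) ^ (n + i)) • a (insert k (V.erase (nthSmallest V i))) =
      ∑ i ∈ Finset.Icc 1 V.card, (if n < i then (-1 : F) ^ (i - n - 1) else (-1 : F) ^ (n + i)) •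
        a (insert k (V.erase (nthSmallest V i))) := by
    simp_rw [ite_smul]
    rw [Finset.sum_ite, hVcard]
    congr 1 <;> refine Finset.sum_congr ?_ fun _ _ => rfl <;> ext i <;>
      simp only [Finset.mem_Icc, Finset.mem_filter] <;> omega
  rw [hsplit, sum_Icc_nthSmallest V (fun i v =>
    (if n < i then (-1 : F) ^ (i - n - 1) else (-1 : F) ^ (n + i)) • a (insert k (V.erase v)))]
  have hsq : (-1 : F) ^ n * (-1 : F) ^ n = 1 := by rw [← mul_pow]; simp
  have haV : a V = -(((-1 : F) ^ n) •
      ∑ v ∈ V, ((-1 : F) ^ rankIn (insert k V) v) • a (insert k (V.erase v))) := by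
    rw [← smul_neg, ← eq_neg_of_add_eq_zero_left hcocycle, smul_smul, hsq, one_smul]
  rw [haV, Finset.smul_sum, ← Finset.sum_neg_distrib]
  refine Finset.sum_congr rfl fun v hv => ?_
  rw [smul_smul, ← neg_smul]
  congr 1
  rcases lt_or_gt_of_ne (show v ≠ k by rintro rfl; exact hkV hv) with h | h
  · have hlt : rankIn V v < n := by
      have := rankIn_strictMonoOn (insert k V) (by simp [hv]) (by simp) h
      rwa [rankIn_insert_of_le h.le, rankIn_insert_of_le le_rfl] at this
    rw [rankIn_insert_of_le h.le, if_neg (by omega)]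
    ring
  · have hle : n ≤ rankIn V v := by
      refine Finset.card_le_card fun x hx => ?_
      simp only [Finset.mem_filter] at hx ⊢
      exact ⟨hx.1, hx.2.trans h⟩
    obtain ⟨m, hm⟩ := Nat.exists_eq_add_of_le hle
    rw [rankIn_insert_of_lt hkV h, if_pos (by omega), hm,
      show n + m + 1 - n - 1 = m by omega, pow_succ, pow_add]
    linear_combination ((-1 : F) ^ m) * hsq
end

section
/- For every k ∈ [K], every vector a_V with V an S-element subset of [K] lies in the F-linear span of the set of vectors { a_{V'} : V' an S-element subset of [K] with k ∈ V' }. -/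
theorem nthSmallest_eq_getElem (V : Finset ℕ) {i : ℕ} (hi : i ∈ Finset.Icc 1 V.card) :
    ∃ h : i - 1 < (V.sort (· ≤ ·)).length, nthSmallest V i = (V.sort (· ≤ ·))[i - 1] := by
  rw [Finset.mem_Icc] at hi
  have h : i - 1 < (V.sort (· ≤ ·)).length := by rw [Finset.length_sort]; omega
  exact ⟨h, List.getD_eq_getElem _ _ h⟩

theorem nthSmallest_mem {V : Finset ℕ} {i : ℕ} (hi : i ∈ Finset.Icc 1 V.card) :
    nthSmallest V i ∈ V := by
  obtain ⟨h, e⟩ := nthSmallest_eq_getElem V hi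
  rw [e, ← Finset.mem_sort (· ≤ ·)]
  exact List.getElem_mem h

theorem nthSmallest_injOn (V : Finset ℕ) :
    Set.InjOn (nthSmallest V) (Finset.Icc 1 V.card) := by
  intro i hi j hj hij
  obtain ⟨h, e⟩ := nthSmallest_eq_getElem V hi
  obtain ⟨h', e'⟩ := nthSmallest_eq_getElem V hj
  rw [e, e', (Finset.sort_nodup V (· ≤ ·)).getElem_inj_iff] at hij
  simp only [Finset.coe_Icc, Set.mem_Icc] at hi hj
  omega

theorem exists_nthSmallest_eq {V : Finset ℕ} {x : ℕ} (hx : x ∈ V) :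
    ∃ i ∈ Finset.Icc 1 V.card, nthSmallest V i = x :=
  Finset.surj_on_of_inj_on_of_card_le (fun i _ => nthSmallest V i) (fun _ hi => nthSmallest_mem hi)
    (fun _ _ hi hj h => nthSmallest_injOn V hi hj h) (by simp) x hx |>.imp
    fun _ ⟨hi, h⟩ => ⟨hi, h.symm⟩

theorem insert_one_erase_subset {K x : ℕ} {V : Finset ℕ} (hK : 1 ≤ K)
    (hV : V ⊆ Finset.Icc 2 K) : insert 1 (V.erase x) ⊆ Finset.Icc 1 K := by
  intro y hy
  rw [Finset.mem_insert, Finset.mem_erase] at hy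
  rcases hy with rfl | ⟨-, hy⟩
  · simpa using hK
  · have := Finset.mem_Icc.1 (hV hy)
    exact Finset.mem_Icc.2 ⟨by omega, this.2⟩

theorem card_insert_one_erase {K x : ℕ} {V : Finset ℕ} (hV : V ⊆ Finset.Icc 2 K)
    (hx : x ∈ V) : (insert 1 (V.erase x)).card = V.card := by
  have h1 : 1 ∉ V.erase x := fun h => by
    have := Finset.mem_Icc.1 (hV (Finset.mem_of_mem_erase h))
    omega
  rw [Finset.card_insert_of_notMem h1, Finset.card_erase_add_one hx]

/-- For every `k ∈ [K]`, every vector `a_V` (`V` an `S`-element subset of `[K]`) lies in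
the `F`-linear span of `{a_{V'} : V'` an `S`-element subset of `[K]` with `k ∈ V'}`. -/
theorem span_from_one_user
    (K S : ℕ) (hS : 2 ≤ S) (hSK : S ≤ K)
    (F : Type*) [Field F] (M : Type*) [AddCommGroup M] [Module F M]
    (a : Finset ℕ → M)
    (ha : ∀ V : Finset ℕ, V ⊆ Finset.Icc 2 K → V.card = S →
      a V = ∑ i ∈ Finset.Icc 1 S,
        ((-1 : F) ^ (i - 1)) • a (insert 1 (V.erase (nthSmallest V i))))
    (k : ℕ) (hk : k ∈ Finset.Icc 1 K)
    (V : Finset ℕ) (hV : V ⊆ Finset.Icc 1 K) (hVcard : V.card = S) :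
    a V ∈ Submodule.span F
      {v : M | ∃ V' : Finset ℕ, V' ⊆ Finset.Icc 1 K ∧ V'.card = S ∧ k ∈ V' ∧ a V' = v} := by
  have hK : 1 ≤ K := by omega
  set N := Submodule.span F
    {v : M | ∃ V' : Finset ℕ, V' ⊆ Finset.Icc 1 K ∧ V'.card = S ∧ k ∈ V' ∧ a V' = v}
  have mem_of_k : ∀ U : Finset ℕ, U ⊆ Finset.Icc 1 K → U.card = S → k ∈ U → a U ∈ N :=
    fun U hU hc hkU => Submodule.subset_span ⟨U, hU, hc, hkU, rfl⟩
  have mem_of_one : ∀ U : Finset ℕ, U ⊆ Finset.Icc 1 K → U.card = S → 1 ∈ U → a U ∈ N := by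
    intro U hU hc h1
    by_cases hkU : k ∈ U
    · exact mem_of_k U hU hc hkU
    have hk1 : k ≠ 1 := fun h => hkU (h ▸ h1)
    -- Exchange `1` for `k`; in the relation for `W`, only the term removing `k` avoids `k`.
    set W := insert k (U.erase 1) with hW
    have hkW : k ∈ W := Finset.mem_insert_self _ _
    have hkU' : k ∉ U.erase 1 := fun h => hkU (Finset.mem_of_mem_erase h)
    have hWsub : W ⊆ Finset.Icc 2 K := by
      intro y hy
      rw [hW, Finset.mem_insert, Finset.mem_erase] at hy
      rw [Finset.mem_Icc] at hk ⊢
      rcases hy with rfl | ⟨hy1, hyU⟩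
      · omega
      · have := Finset.mem_Icc.1 (hU hyU)
        omega
    have hWc : W.card = S := by
      rw [hW, Finset.card_insert_of_notMem hkU', Finset.card_erase_add_one h1, hc]
    obtain ⟨i, hi, hik⟩ := exists_nthSmallest_eq hkW
    rw [hWc] at hi
    have hrel := ha W hWsub hWc
    rw [← Finset.add_sum_erase _ _ hi, hik, hW, Finset.erase_insert hkU',
      Finset.insert_erase h1, ← hW] at hrel
    have hrest : ∑ j ∈ (Finset.Icc 1 S).erase i,
        ((-1 : F) ^ (j - 1)) • a (insert 1 (W.erase (nthSmallest W j))) ∈ N := by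
      refine Submodule.sum_mem _ fun j hj => Submodule.smul_mem _ _ ?_
      obtain ⟨hji, hj⟩ := Finset.mem_erase.1 hj
      rw [← hWc] at hi hj
      refine mem_of_k _ (insert_one_erase_subset hK hWsub)
        ((card_insert_one_erase hWsub (nthSmallest_mem hj)).trans hWc)
        (Finset.mem_insert_of_mem (Finset.mem_erase.2 ⟨fun h => hji ?_, hkW⟩))
      exact nthSmallest_injOn W hj hi (h.symm.trans hik.symm)
    have hWN : a W ∈ N :=
      mem_of_k W (hWsub.trans (Finset.Icc_subset_Icc_left one_le_two)) hWc hkW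
    rw [hrel, Submodule.add_mem_iff_left _ hrest] at hWN
    exact (Submodule.smul_mem_iff _ (pow_ne_zero _ (neg_ne_zero.2 one_ne_zero))).1 hWN
  by_cases h1 : 1 ∈ V
  · exact mem_of_one V hV hVcard h1
  have hV2 : V ⊆ Finset.Icc 2 K := by
    intro y hy
    have hy1 : y ≠ 1 := fun h => h1 (h ▸ hy)
    have := Finset.mem_Icc.1 (hV hy)
    exact Finset.mem_Icc.2 ⟨by omega, this.2⟩
  rw [ha V hV2 hVcard]
  refine Submodule.sum_mem _ fun i hi => Submodule.smul_mem _ _ ?_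
  rw [← hVcard] at hi
  exact mem_of_one _ (insert_one_erase_subset hK hV2)
    ((card_insert_one_erase hV2 (nthSmallest_mem hi)).trans hVcard) (Finset.mem_insert_self _ _)
end

section
/- For every k ∈ [K] and every k' ∈ [K] with k' ≠ k, the F-linear span of { a_V : V an S-element subset of [K] \ {k} } equals the F-linear span of the subfamily { a_V : V an S-element subset of [K] \ {k} with k' ∈ V }. -/
/-- The sign `(-1) ^ #{x ∈ V | x < w}` attached to the position of `w` in `V`. -/
def positionSign (F : Type*) [Field F] (V : Finset ℕ) (w : ℕ) : F :=
  (-1) ^ (V.filter (· < w)).card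

/-- A sum over positions in `V` is the corresponding sum over elements of `V`. -/
theorem sum_nthSmallest_eq_sum {F M : Type*} [Field F] [AddCommGroup M] [Module F M]
    (V : Finset ℕ) (S : ℕ) (hV : V.card = S) (f : ℕ → M) :
    ∑ i ∈ Finset.Icc 1 S, ((-1 : F) ^ (i - 1)) • f (nthSmallest V i) =
      ∑ w ∈ V, positionSign F V w • f w := by
  have hIcc : Finset.Icc 1 S = (Finset.range S).map (addRightEmbedding 1) := by
    ext x
    simp only [Finset.mem_Icc, Finset.mem_map, Finset.mem_range, addRightEmbedding_apply]
    exact ⟨fun h => ⟨x - 1, by omega, by omega⟩, fun ⟨y, hy, hyx⟩ => by omega⟩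
  rw [hIcc, Finset.sum_map, Finset.sum_range]
  conv_rhs => rw [← Finset.sum_coe_sort, ← (V.orderIsoOfFin hV).toEquiv.sum_comp]
  refine Finset.sum_congr rfl fun i _ => ?_
  have hnth : nthSmallest V (i + 1) = V.orderEmbOfFin hV i := by
    rw [nthSmallest, Finset.orderEmbOfFin_apply, Nat.add_sub_cancel, List.getD_eq_getElem]
    rfl
  have hfilter : V.filter (· < V.orderEmbOfFin hV i) =
      (Finset.Iio i).map (V.orderEmbOfFin hV).toEmbedding := by
    ext x
    simp only [Finset.mem_filter, Finset.mem_map, Finset.mem_Iio]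
    constructor
    · rintro ⟨hx, hxi⟩
      obtain ⟨j, rfl⟩ : x ∈ Set.range (V.orderEmbOfFin hV) := by simpa using hx
      exact ⟨j, by simpa using hxi, rfl⟩
    · rintro ⟨j, hj, rfl⟩
      exact ⟨V.orderEmbOfFin_mem hV j, by simpa using hj⟩
  have hsign : positionSign F V (V.orderEmbOfFin hV i) = (-1) ^ (i : ℕ) := by
    rw [positionSign, hfilter, Finset.card_map, Fin.card_Iio]
  simp only [addRightEmbedding_apply, Nat.add_sub_cancel, hnth,
    RelIso.coe_fn_toEquiv, Finset.coe_orderIsoOfFin_apply, hsign]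

/-- A lower bound of `V` has sign `1`. -/
theorem positionSign_eq_one (F : Type*) [Field F] {V : Finset ℕ} {w : ℕ}
    (hw : ∀ x ∈ V, w ≤ x) : positionSign F V w = 1 := by
  rw [positionSign, Finset.filter_false_of_mem fun x hx => (hw x hx).not_gt,
    Finset.card_empty, pow_zero]

/-- Removing two elements in either order gives opposite products of signs. -/
theorem positionSign_mul_erase_antisymm (F : Type*) [Field F] {W : Finset ℕ} {u w : ℕ}
    (hu : u ∈ W) (hw : w ∈ W) (huw : u ≠ w) :
    positionSign F W w * positionSign F (W.erase w) u +
      positionSign F W u * positionSign F (W.erase u) w = 0 := by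
  wlog h : u < w generalizing u w
  · rw [add_comm]
    exact this hw hu huw.symm (by omega)
  have hbelow : (W.erase w).filter (· < u) = W.filter (· < u) := by
    ext x; simp only [Finset.mem_filter, Finset.mem_erase]; grind
  have habove : W.filter (· < w) = insert u ((W.erase u).filter (· < w)) := by
    ext x; simp only [Finset.mem_filter, Finset.mem_erase, Finset.mem_insert]; grind
  simp only [positionSign]
  rw [hbelow, habove, Finset.card_insert_of_notMem (by simp)]
  ring

/-- A family determined by coning over `1` satisfies the alternating relation on every
`(S + 1)`-element subset of `[K]`. -/
theorem alternating_sum_erase_eq_zero {F M : Type*} [Field F] [AddCommGroup M] [Module F M]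
    {K S : ℕ} {a : Finset ℕ → M}
    (ha : ∀ V : Finset ℕ, V ⊆ Finset.Icc 2 K → V.card = S →
      a V = ∑ w ∈ V, positionSign F V w • a (insert 1 (V.erase w)))
    {W : Finset ℕ} (hW : W ⊆ Finset.Icc 1 K) (hcard : W.card = S + 1) :
    ∑ w ∈ W, positionSign F W w • a (W.erase w) = 0 := by
  have hW' : ∀ x ∈ W, 1 ≤ x ∧ x ≤ K := fun x hx => Finset.mem_Icc.1 (hW hx)
  by_cases h1 : 1 ∈ W
  · have hV : W.erase 1 ⊆ Finset.Icc 2 K := by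
      intro x hx
      have := hW' x (Finset.mem_of_mem_erase hx)
      have := Finset.ne_of_mem_erase hx
      exact Finset.mem_Icc.2 (by omega)
    have hsign : positionSign F W 1 = 1 :=
      positionSign_eq_one F fun x hx => (hW' x hx).1
    rw [← Finset.add_sum_erase W _ h1, hsign, one_smul,
      ha _ hV (by rw [Finset.card_erase_of_mem h1, hcard, Nat.add_sub_cancel]),
      ← Finset.sum_add_distrib]
    refine Finset.sum_eq_zero fun w hw => ?_
    obtain ⟨hw1, hwW⟩ := Finset.mem_erase.1 hw
    have hset : insert 1 ((W.erase 1).erase w) = W.erase w := by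
      ext x; simp only [Finset.mem_insert, Finset.mem_erase]; grind
    have hanti := positionSign_mul_erase_antisymm F hwW h1 hw1
    have hsign' : positionSign F (W.erase w) 1 = 1 :=
      positionSign_eq_one F fun x hx => (hW' x (Finset.mem_of_mem_erase hx)).1
    rw [hsign, hsign', one_mul, mul_one] at hanti
    rw [hset, ← add_smul, hanti, zero_smul]
  · have hexpand : ∀ w ∈ W, positionSign F W w • a (W.erase w) =
        ∑ u ∈ W.erase w, (positionSign F W w * positionSign F (W.erase w) u) •
          a (insert 1 ((W.erase w).erase u)) := by
      intro w hw
      rw [ha (W.erase w) ?_ (by rw [Finset.card_erase_of_mem hw, hcard, Nat.add_sub_cancel]),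
        Finset.smul_sum]
      · simp only [smul_smul]
      · intro x hx
        have hxW := Finset.mem_of_mem_erase hx
        have := hW' x hxW
        have : x ≠ 1 := fun h => h1 (h ▸ hxW)
        exact Finset.mem_Icc.2 (by omega)
    rw [Finset.sum_congr rfl hexpand, Finset.sum_sigma']
    refine Finset.sum_involution (fun p _ => ⟨p.2, p.1⟩) ?_ ?_ ?_ ?_
    · rintro ⟨w, u⟩ hp
      obtain ⟨hw, huw, hu⟩ : w ∈ W ∧ u ≠ w ∧ u ∈ W := by simpa using hp
      simp only
      rw [Finset.erase_right_comm (a := u) (b := w), ← add_smul,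
        positionSign_mul_erase_antisymm F hu hw huw, zero_smul]
    · rintro ⟨w, u⟩ hp _ heq
      obtain ⟨hw, huw, hu⟩ : w ∈ W ∧ u ≠ w ∧ u ∈ W := by simpa using hp
      exact huw (congrArg Sigma.fst heq)
    · rintro ⟨w, u⟩ hp
      obtain ⟨hw, huw, hu⟩ : w ∈ W ∧ u ≠ w ∧ u ∈ W := by simpa using hp
      simpa using ⟨hu, huw.symm, hw⟩
    · rintro ⟨w, u⟩ _
      rfl

/-- For `k, k' ∈ [K]` with `k' ≠ k`, the span of `{a_V : V` an `S`-element subset of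
`[K] \ {k}}` equals the span of the subfamily of those `V` additionally containing `k'`. -/
theorem span_eq_span_containing
    (K S : ℕ) (hS : 2 ≤ S) (hSK : S ≤ K)
    (F : Type*) [Field F] (M : Type*) [AddCommGroup M] [Module F M]
    (a : Finset ℕ → M)
    (ha : ∀ V : Finset ℕ, V ⊆ Finset.Icc 2 K → V.card = S →
      a V = ∑ i ∈ Finset.Icc 1 S,
        ((-1 : F) ^ (i - 1)) • a (insert 1 (V.erase (nthSmallest V i))))
    (k k' : ℕ) (hk : k ∈ Finset.Icc 1 K) (hk' : k' ∈ Finset.Icc 1 K) (hkk' : k' ≠ k) :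
    Submodule.span F
        {v : M | ∃ V : Finset ℕ, V ⊆ (Finset.Icc 1 K).erase k ∧ V.card = S ∧ a V = v} =
      Submodule.span F
        {v : M | ∃ V : Finset ℕ,
          V ⊆ (Finset.Icc 1 K).erase k ∧ V.card = S ∧ k' ∈ V ∧ a V = v} := by
  refine le_antisymm (Submodule.span_le.2 ?_) (Submodule.span_mono ?_)
  · rintro _ ⟨V, hV, hcard, rfl⟩
    by_cases hmem : k' ∈ V
    · exact Submodule.subset_span ⟨V, hV, hcard, hmem, rfl⟩
    have hW : insert k' V ⊆ (Finset.Icc 1 K).erase k :=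
      Finset.insert_subset (Finset.mem_erase.2 ⟨hkk', hk'⟩) hV
    have hWcard : (insert k' V).card = S + 1 := by
      rw [Finset.card_insert_of_notMem hmem, hcard]
    have hrel := alternating_sum_erase_eq_zero (F := F) (a := a) (K := K) (S := S)
      (fun U hU hUcard => (ha U hU hUcard).trans
        (sum_nthSmallest_eq_sum U S hUcard fun w => a (insert 1 (U.erase w))))
      (hW.trans (Finset.erase_subset _ _)) hWcard
    rw [Finset.sum_insert hmem, Finset.erase_insert hmem] at hrel
    have hunit : positionSign F (insert k' V) k' ≠ 0 := pow_ne_zero _ (by simp)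
    rw [SetLike.mem_coe, ← Submodule.smul_mem_iff _ hunit, eq_neg_of_add_eq_zero_left hrel]
    refine Submodule.neg_mem _ (Submodule.sum_mem _ fun w hw => Submodule.smul_mem _ _ ?_)
    refine Submodule.subset_span ⟨_, (Finset.erase_subset _ _).trans hW, ?_, ?_, rfl⟩
    · rw [Finset.card_erase_of_mem (Finset.mem_insert_of_mem hw), hWcard, Nat.add_sub_cancel]
    · exact Finset.mem_erase.2 ⟨fun h => hmem (h ▸ hw), Finset.mem_insert_self _ _⟩
  · rintro _ ⟨V, hV, hcard, _, rfl⟩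
    exact ⟨V, hV, hcard, rfl⟩
end

section
/- For every k ∈ [K], the dimension of the F-linear span of { a_V : V an S-element subset of [K] \ {k} } is at most the binomial coefficient C(K−2, S−1). -/
/-- The sign `(-1) ^ #{y ∈ V | y < x}` of the position of `x` in `V`. -/
def posSign (F : Type*) [Field F] (V : Finset ℕ) (x : ℕ) : F :=
  (-1) ^ (V.filter (· < x)).card

theorem nthSmallest_eq_orderEmbOfFin {V : Finset ℕ} {n : ℕ} (h : V.card = n) (i : Fin n) :
    nthSmallest V (i + 1) = V.orderEmbOfFin h i := by
  simp [nthSmallest, Finset.orderEmbOfFin_apply, List.getD_eq_getElem?_getD, h]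

theorem card_filter_lt_orderEmbOfFin {V : Finset ℕ} {n : ℕ} (h : V.card = n) (i : Fin n) :
    (V.filter (· < V.orderEmbOfFin h i)).card = i := by
  have : V.filter (· < V.orderEmbOfFin h i) =
      (Finset.Iio i).map (V.orderEmbOfFin h).toEmbedding := by
    ext y
    simp only [Finset.mem_filter, Finset.mem_map, Finset.mem_Iio]
    constructor
    · rintro ⟨hy, hlt⟩
      rw [← Finset.mem_coe, ← Finset.range_orderEmbOfFin V h] at hy
      obtain ⟨j, rfl⟩ := hy
      exact ⟨j, by simpa using hlt, rfl⟩
    · rintro ⟨j, hj, rfl⟩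
      exact ⟨Finset.orderEmbOfFin_mem V h j, by simpa using hj⟩
  rw [this, Finset.card_map, Fin.card_Iio]

/-- An alternating sum over positions is a signed sum over elements. -/
theorem sum_nthSmallest_eq_sum_posSign {F M : Type*} [Field F] [AddCommGroup M] [Module F M]
    {V : Finset ℕ} {n : ℕ} (h : V.card = n) (f : ℕ → M) :
    ∑ i ∈ Finset.Icc 1 n, ((-1 : F) ^ (i - 1)) • f (nthSmallest V i) =
      ∑ x ∈ V, posSign F V x • f x := by
  have hV : ∑ x ∈ V, posSign F V x • f x =
      ∑ i : Fin n, ((-1 : F) ^ (i : ℕ)) • f (V.orderEmbOfFin h i) := by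
    rw [← Finset.sum_coe_sort V]
    refine (Fintype.sum_equiv (V.orderIsoOfFin h).toEquiv _ _ fun i => ?_).symm
    change _ = posSign F V (V.orderEmbOfFin h i) • f (V.orderEmbOfFin h i)
    rw [posSign, card_filter_lt_orderEmbOfFin h i]
  rw [hV, ← Finset.Ico_succ_right_eq_Icc, Finset.sum_Ico_eq_sum_range, Finset.sum_range]
  refine Finset.sum_congr rfl fun i _ => ?_
  rw [← nthSmallest_eq_orderEmbOfFin h i, add_comm 1 (i : ℕ), Nat.add_sub_cancel]

theorem posSign_erase_of_lt (F : Type*) [Field F] (V : Finset ℕ) {x y : ℕ} (hxy : x < y) :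
    posSign F (V.erase y) x = posSign F V x := by
  rw [posSign, posSign, Finset.filter_erase, Finset.erase_eq_of_notMem]
  simp [hxy.le]

theorem posSign_erase_of_gt (F : Type*) [Field F] {V : Finset ℕ} {x y : ℕ} (hx : x ∈ V)
    (hxy : x < y) : posSign F (V.erase x) y = -posSign F V y := by
  have hmem : x ∈ V.filter (· < y) := by simp [hx, hxy]
  rw [posSign, posSign, Finset.filter_erase, ← Finset.card_erase_add_one hmem, pow_succ]
  simp

theorem posSign_insert_of_lt (F : Type*) [Field F] {V : Finset ℕ} {p y : ℕ} (hp : p ∉ V)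
    (hpy : p < y) : posSign F (insert p V) y = -posSign F V y := by
  have h := posSign_erase_of_gt F (Finset.mem_insert_self p V) hpy
  rw [Finset.erase_insert hp] at h
  rw [h, neg_neg]

theorem posSign_mul_posSign_erase_antisymm (F : Type*) [Field F] {V : Finset ℕ} {x y : ℕ}
    (hx : x ∈ V) (hy : y ∈ V) (hxy : x ≠ y) :
    posSign F V x * posSign F (V.erase x) y + posSign F V y * posSign F (V.erase y) x = 0 := by
  rcases lt_or_gt_of_ne hxy with h | h
  · rw [posSign_erase_of_gt F hx h, posSign_erase_of_lt F V h]; ring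
  · rw [posSign_erase_of_gt F hy h, posSign_erase_of_lt F V h]; ring

/-- The simplicial identity `∂ ∘ ∂ = 0` in signed form. -/
theorem sum_posSign_sum_posSign_erase {F M : Type*} [Field F] [AddCommGroup M] [Module F M]
    (V : Finset ℕ) (c : Finset ℕ → M) :
    ∑ x ∈ V, posSign F V x •
      ∑ y ∈ V.erase x, posSign F (V.erase x) y • c ((V.erase x).erase y) = 0 := by
  simp_rw [Finset.smul_sum, smul_smul]
  rw [Finset.sum_sigma']
  refine Finset.sum_involution (fun p _ => ⟨p.2, p.1⟩) ?_ ?_ ?_ ?_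
  · rintro ⟨x, y⟩ h
    simp only [Finset.mem_sigma, Finset.mem_erase] at h
    simp only
    rw [Finset.erase_right_comm (a := y), ← add_smul,
      posSign_mul_posSign_erase_antisymm F h.1 h.2.2 h.2.1.symm, zero_smul]
  · rintro ⟨x, y⟩ h _ heq
    simp only [Finset.mem_sigma, Finset.mem_erase] at h
    simp only [Sigma.mk.injEq] at heq
    exact h.2.1 heq.1
  · rintro ⟨x, y⟩ h
    simp only [Finset.mem_sigma, Finset.mem_erase] at h ⊢
    exact ⟨h.2.2, h.2.1.symm, h.1⟩
  · rintro ⟨x, y⟩ _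
    rfl

/-- If each `a V` with `V ⊆ G` expands along a pivot `p`, then the `n`-subsets of `insert p G`
that contain `p` suffice to span. -/
theorem finrank_span_le_of_pivot {F M : Type*} [Field F] [AddCommGroup M] [Module F M]
    (a : Finset ℕ → M) (G : Finset ℕ) (p n : ℕ)
    (h : ∀ V ⊆ G, V.card = n →
      a V = ∑ x ∈ V, posSign F V x • a (insert p (V.erase x))) :
    Module.finrank F (Submodule.span F
      {v : M | ∃ V : Finset ℕ, V ⊆ insert p G ∧ V.card = n ∧ a V = v}) ≤
      G.card.choose (n - 1) := by
  classical
  set T : Finset M := (G.powersetCard (n - 1)).image fun U => a (insert p U)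
  have hmem : ∀ U ⊆ G, U.card = n - 1 → a (insert p U) ∈ Submodule.span F (T : Set M) :=
    fun U hU hc => Submodule.subset_span <| Finset.mem_coe.2 <|
      Finset.mem_image_of_mem _ (Finset.mem_powersetCard.2 ⟨hU, hc⟩)
  have hle : Submodule.span F
      {v : M | ∃ V : Finset ℕ, V ⊆ insert p G ∧ V.card = n ∧ a V = v} ≤
      Submodule.span F (T : Set M) := by
    rw [Submodule.span_le]
    rintro _ ⟨V, hV, hc, rfl⟩
    by_cases hp : p ∈ V
    · rw [← Finset.insert_erase hp]
      exact hmem _ (Finset.subset_insert_iff.1 hV)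
        (by rw [Finset.card_erase_of_mem hp, hc])
    · have hVG : V ⊆ G := (Finset.subset_insert_iff_of_notMem hp).1 hV
      rw [h V hVG hc]
      refine Submodule.sum_mem _ fun x hx => Submodule.smul_mem _ _ ?_
      exact hmem _ ((Finset.erase_subset _ _).trans hVG)
        (by rw [Finset.card_erase_of_mem hx, hc])
  calc _ ≤ Module.finrank F (Submodule.span F (T : Set M)) := Submodule.finrank_mono hle
    _ ≤ T.card := finrank_span_finset_le_card T
    _ ≤ _ := Finset.card_image_le.trans (Finset.card_powersetCard _ _).le

/-- If `q` lies below `G`, expansion along `p` on subsets of `insert q G` implies expansion along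
`q` on subsets of `G`. -/
theorem pivot_expansion_of_lt {F M : Type*} [Field F] [AddCommGroup M] [Module F M]
    (a : Finset ℕ → M) (G : Finset ℕ) (p q n : ℕ) (hG : ∀ x ∈ G, q < x)
    (h : ∀ V ⊆ insert q G, V.card = n →
      a V = ∑ x ∈ V, posSign F V x • a (insert p (V.erase x)))
    (V : Finset ℕ) (hV : V ⊆ G) (hc : V.card = n) :
    a V = ∑ x ∈ V, posSign F V x • a (insert q (V.erase x)) := by
  have hq : q ∉ V := fun hq => lt_irrefl q (hG q (hV hq))
  have hexp : ∀ x ∈ V, a (insert q (V.erase x)) = a (insert p (V.erase x)) -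
      ∑ y ∈ V.erase x, posSign F (V.erase x) y •
        a (insert p (insert q ((V.erase x).erase y))) := by
    intro x hx
    have hqx : q ∉ V.erase x := fun h => hq (Finset.mem_of_mem_erase h)
    rw [h (insert q (V.erase x))
      (Finset.insert_subset_insert q ((Finset.erase_subset _ _).trans hV))
      (by rw [Finset.card_insert_of_notMem hqx, Finset.card_erase_add_one hx, hc]),
      Finset.sum_insert hqx, Finset.erase_insert hqx, sub_eq_add_neg, ← Finset.sum_neg_distrib]
    congr 1
    · have : posSign F (insert q (V.erase x)) q = 1 := by
        rw [posSign, Finset.filter_false_of_mem, Finset.card_empty, pow_zero]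
        intro y hy
        rcases Finset.mem_insert.1 hy with rfl | hy
        · exact lt_irrefl y
        · exact (hG y (hV (Finset.mem_of_mem_erase hy))).le.not_gt
      rw [this, one_smul]
    · refine Finset.sum_congr rfl fun y hy => ?_
      have hqy : q < y := hG y (hV (Finset.mem_of_mem_erase hy))
      rw [posSign_insert_of_lt F hqx hqy, neg_smul, Finset.erase_insert_of_ne hqy.ne]
  rw [Finset.sum_congr rfl fun x hx => by rw [hexp x hx, smul_sub], Finset.sum_sub_distrib,
    sum_posSign_sum_posSign_erase V fun U => a (insert p (insert q U)), sub_zero]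
  exact h V (hV.trans (Finset.subset_insert q G)) hc

/-- For every `k ∈ [K]`, the dimension of the span of
`{a_V : V` an `S`-element subset of `[K] \ {k}}` is at most `C(K−2, S−1)`. -/
theorem span_dim_le
    (K S : ℕ) (hS : 2 ≤ S) (hSK : S ≤ K)
    (F : Type*) [Field F] (M : Type*) [AddCommGroup M] [Module F M]
    (a : Finset ℕ → M)
    (ha : ∀ V : Finset ℕ, V ⊆ Finset.Icc 2 K → V.card = S →
      a V = ∑ i ∈ Finset.Icc 1 S,
        ((-1 : F) ^ (i - 1)) • a (insert 1 (V.erase (nthSmallest V i))))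
    (k : ℕ) (hk : k ∈ Finset.Icc 1 K) :
    Module.finrank F
        ↥(Submodule.span F
          {v : M | ∃ V : Finset ℕ, V ⊆ (Finset.Icc 1 K).erase k ∧ V.card = S ∧ a V = v}) ≤
      (K - 2).choose (S - 1) := by
  have hexp : ∀ V ⊆ Finset.Icc 2 K, V.card = S →
      a V = ∑ x ∈ V, posSign F V x • a (insert 1 (V.erase x)) := fun V hV hc => by
    rw [ha V hV hc, sum_nthSmallest_eq_sum_posSign hc fun x => a (insert 1 (V.erase x))]
  rw [Finset.mem_Icc] at hk
  by_cases hk1 : k = 1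
  · have hground : (Finset.Icc 1 K).erase k = insert 2 (Finset.Icc 3 K) := by
      ext x
      simp only [Finset.mem_erase, Finset.mem_Icc, Finset.mem_insert]
      omega
    have hsub : insert 2 (Finset.Icc 3 K) ⊆ Finset.Icc 2 K := by
      intro x
      simp only [Finset.mem_Icc, Finset.mem_insert]
      omega
    have hcard : (Finset.Icc 3 K).card = K - 2 := by
      rw [Nat.card_Icc]
      omega
    rw [hground, ← hcard]
    exact finrank_span_le_of_pivot a _ 2 S <|
      pivot_expansion_of_lt a _ 1 2 S (fun x hx => (Finset.mem_Icc.1 hx).1)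
        fun V hV => hexp V (hV.trans hsub)
  · have hground : (Finset.Icc 1 K).erase k = insert 1 ((Finset.Icc 2 K).erase k) := by
      ext x
      simp only [Finset.mem_erase, Finset.mem_Icc, Finset.mem_insert]
      omega
    have hcard : ((Finset.Icc 2 K).erase k).card = K - 2 := by
      rw [Finset.card_erase_of_mem (Finset.mem_Icc.2 (by omega)), Nat.card_Icc]
      omega
    rw [hground, ← hcard]
    exact finrank_span_le_of_pivot a _ 1 S fun V hV =>
      hexp V (hV.trans (Finset.erase_subset _ _))
end

section
/- Let K, S, U be natural numbers with K ≥ S ≥ 2 and U ≥ 1. Then U · C(K−2, S−2) + C(K−1−U, S−1) ≥ C(K−1, S−1); equivalently, U · C(K−2, S−2) ≥ C(K−1, S−1) − C(K−1−U, S−1). -/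
theorem choose_succ_le_mul_choose_add_choose_sub (n r U : ℕ) :
    (n + 1).choose (r + 1) ≤ U * n.choose r + (n + 1 - U).choose (r + 1) := by
  induction U with
  | zero => simp
  | succ U ih =>
    have step : (n + 1 - U).choose (r + 1) ≤
        n.choose r + (n + 1 - (U + 1)).choose (r + 1) := by
      rcases Nat.lt_or_ge n U with h | h
      · simp [Nat.sub_eq_zero_of_le h]
      · rw [Nat.sub_add_comm h, Nat.choose_succ_succ, Nat.add_sub_add_right]
        gcongr
        exact Nat.sub_le n U
    rw [Nat.succ_mul]
    lia

/-- `U·C(K−2, S−2) + C(K−1−U, S−1) ≥ C(K−1, S−1)`; equivalently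
`U·C(K−2, S−2) ≥ C(K−1, S−1) − C(K−1−U, S−1)` (truncated subtraction). -/
theorem enough_space (K S U : ℕ) (hSK : S ≤ K) (hS : 2 ≤ S) (hU : 1 ≤ U) :
    (K - 1).choose (S - 1) ≤ U * (K - 2).choose (S - 2) + (K - 1 - U).choose (S - 1) ∧
    (K - 1).choose (S - 1) - (K - 1 - U).choose (S - 1) ≤ U * (K - 2).choose (S - 2) := by
  obtain ⟨r, rfl⟩ := Nat.exists_eq_add_of_le' hS
  obtain ⟨n, rfl⟩ := Nat.exists_eq_add_of_le' (hS.trans hSK)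
  have h := choose_succ_le_mul_choose_add_choose_sub n r U
  exact ⟨h, Nat.sub_le_iff_le_add.mpr h⟩
end

section
/- Let K, S, U be integers with 2 ≤ S ≤ K and 1 ≤ U ≤ K−1, let 𝒰 be a U-element subset of [K] = {1,…,K}, and let u ∈ [K] \ 𝒰. Let 𝒞 be the collection of all S-element subsets V of [K] with u ∈ V and V ∩ 𝒰 ≠ ∅, and set N = C(K−1, S−1) − C(K−1−U, S−1). Then there exists a function x assigning a natural number x(V, k) to each pair (V, k) with V ∈ 𝒞 and k ∈ 𝒰, such that: (i) x(V, k) = 0 whenever k ∉ V; (ii) for every k ∈ 𝒰, Σ_{V ∈ 𝒞} x(V, k) = N; and (iii) for every V ∈ 𝒞, Σ_{k ∈ 𝒰} x(V, k) = U. -/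
open Finset

/-- A family of permutations indexed by `Fin s.card` that fixes the complement of `s` pointwise
and acts sharply transitively on `s` (a cyclic Latin square on `s`). -/
lemma exists_sharply_transitive_perms {α : Type*} [DecidableEq α] (s : Finset α)
    (hs : s.Nonempty) :
    ∃ σ : Fin s.card → Equiv.Perm α, (∀ g, ∀ a ∉ s, σ g a = a) ∧ (∀ g, ∀ a ∈ s, σ g a ∈ s) ∧
      ∀ a ∈ s, ∀ b ∈ s, ∃! g, σ g a = b := by
  have : NeZero s.card := ⟨hs.card_pos.ne'⟩
  let e := s.equivFin
  let τ : Fin s.card → Equiv.Perm s := fun g => (e.trans (Equiv.addRight g)).trans e.symm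
  have hτ : ∀ g, ∀ a, ∀ ha : a ∈ s,
      Equiv.Perm.ofSubtype (τ g) a = (e.symm (e ⟨a, ha⟩ + g) : α) := fun g a ha => by
    rw [Equiv.Perm.ofSubtype_apply_of_mem _ ha]; rfl
  refine ⟨fun g => Equiv.Perm.ofSubtype (τ g), ?_, ?_, ?_⟩
  · intro g a ha
    exact Equiv.Perm.ofSubtype_apply_of_not_mem _ ha
  · intro g a ha
    rw [hτ g a ha]
    exact Subtype.coe_prop _
  · intro a ha b hb
    have key : ∀ g, Equiv.Perm.ofSubtype (τ g) a = b ↔ g = -e ⟨a, ha⟩ + e ⟨b, hb⟩ := fun g => by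
      rw [hτ g a ha, eq_neg_add_iff_add_eq, ← Equiv.symm_apply_eq, Subtype.ext_iff]
    exact ⟨_, (key _).2 rfl, fun g hg => (key g).1 hg⟩

/-- If a family `C` of sets meeting `s` is invariant under the permutations of `s`, then `#s` units
can be distributed over the elements of `V ∩ s` for each `V ∈ C` so that each element of `s`
receives `#C` units in total. -/
lemma exists_balanced_assignment {α : Type*} [DecidableEq α] (s : Finset α) (hs : s.Nonempty)
    (C : Finset (Finset α)) (hmeet : ∀ V ∈ C, (V ∩ s).Nonempty)
    (hinv : ∀ σ : Equiv.Perm α, (∀ a ∉ s, σ a = a) → (∀ a ∈ s, σ a ∈ s) →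
      ∀ V ∈ C, V.map σ.toEmbedding ∈ C) :
    ∃ x : Finset α → α → ℕ, (∀ V ∈ C, ∀ k ∈ s, k ∉ V → x V k = 0) ∧
      (∀ k ∈ s, ∑ V ∈ C, x V k = C.card) ∧ (∀ V ∈ C, ∑ k ∈ s, x V k = s.card) := by
  obtain ⟨σ, hfix, hmaps, htrans⟩ := exists_sharply_transitive_perms s hs
  have hchoice : ∀ V : Finset α, ∃ a, V ∈ C → a ∈ V ∩ s := fun V => by
    by_cases hV : V ∈ C
    · obtain ⟨a, ha⟩ := hmeet V hV
      exact ⟨a, fun _ => ha⟩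
    · exact ⟨hs.choose, fun h => absurd h hV⟩
  choose f hf using hchoice
  have hmem : ∀ V ∈ C, f V ∈ V ∧ f V ∈ s := fun V hV => mem_inter.1 (hf V hV)
  have hfix' : ∀ g, ∀ a ∉ s, (σ g).symm a = a := fun g a ha => by
    rw [Equiv.symm_apply_eq, hfix g a ha]
  have hmaps' : ∀ g, ∀ a ∈ s, (σ g).symm a ∈ s := fun g a ha => by
    by_contra h
    have h' := hfix g _ h
    rw [Equiv.apply_symm_apply] at h'
    exact h (h' ▸ ha)
  have hback : ∀ g, ∀ V ∈ C, V.map (σ g).symm.toEmbedding ∈ C := fun g =>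
    hinv _ (hfix' g) (hmaps' g)
  refine ⟨fun V k => #{g | σ g (f (V.map (σ g).symm.toEmbedding)) = k}, ?_, ?_, ?_⟩
  · intro V hV k _ hkV
    rw [card_eq_zero, filter_eq_empty_iff]
    rintro g - rfl
    have h := (hmem _ (hback g V hV)).1
    rw [mem_map_equiv, Equiv.symm_symm] at h
    exact hkV h
  · intro k hk
    simp only [card_filter]
    rw [sum_comm]
    have hshift : ∀ g, ∑ V ∈ C, (if σ g (f (V.map (σ g).symm.toEmbedding)) = k then 1 else 0) =
        ∑ W ∈ C, if σ g (f W) = k then 1 else 0 := fun g => by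
      refine sum_bij' (fun V _ => V.map (σ g).symm.toEmbedding)
        (fun W _ => W.map (σ g).toEmbedding) (hback g)
        (hinv _ (hfix g) (hmaps g)) ?_ ?_ (fun _ _ => rfl)
      all_goals
        intro V _
        ext a
        simp
    simp only [hshift]
    rw [sum_comm, card_eq_sum_ones C]
    refine sum_congr rfl fun W hW => ?_
    rw [← card_filter]
    obtain ⟨g, hg, huniq⟩ := htrans _ (hmem W hW).2 k hk
    rw [card_eq_one]
    refine ⟨g, ?_⟩
    ext g'
    simp only [mem_filter, mem_univ, true_and, mem_singleton]
    exact ⟨huniq g', fun h => h ▸ hg⟩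
  · intro V hV
    have h := card_eq_sum_card_fiberwise (s := (univ : Finset (Fin s.card))) (t := s)
      (f := fun g => σ g (f (V.map (σ g).symm.toEmbedding)))
      (fun g _ => hmaps g _ (hmem _ (hback g V hV)).2)
    rw [card_univ, Fintype.card_fin] at h
    exact h.symm

lemma card_powersetCard_filter_mem {α : Type*} [DecidableEq α] (A : Finset α) (u : α) (hu : u ∈ A)
    (n : ℕ) (hn : 1 ≤ n) :
    #{V ∈ A.powersetCard n | u ∈ V} = (A.card - 1).choose (n - 1) := by
  rw [← card_erase_of_mem hu, ← card_powersetCard]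
  refine card_bij' (fun V _ => V.erase u) (fun W _ => insert u W) ?_ ?_ ?_ ?_
  · intro V hV
    simp only [mem_filter, mem_powersetCard] at hV ⊢
    exact ⟨erase_subset_erase u hV.1.1, by rw [card_erase_of_mem hV.2, hV.1.2]⟩
  · intro W hW
    rw [mem_powersetCard] at hW
    have huW : u ∉ W := fun h => notMem_erase u A (hW.1 h)
    simp only [mem_filter, mem_powersetCard]
    refine ⟨⟨insert_subset hu (hW.1.trans (erase_subset u A)), ?_⟩, mem_insert_self u W⟩
    rw [card_insert_of_notMem huW]
    omega
  · intro V hV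
    exact insert_erase (mem_filter.1 hV).2
  · intro W hW
    exact erase_insert fun h => notMem_erase u A ((mem_powersetCard.1 hW).1 h)

lemma card_powersetCard_filter_mem_inter_nonempty {α : Type*} [DecidableEq α] (A s : Finset α)
    (hs : s ⊆ A) (u : α) (hu : u ∈ A) (hus : u ∉ s) (n : ℕ) (hn : 1 ≤ n) :
    #{V ∈ A.powersetCard n | u ∈ V ∧ (V ∩ s).Nonempty} =
      (A.card - 1).choose (n - 1) - (A.card - 1 - s.card).choose (n - 1) := by
  have hall := card_powersetCard_filter_mem A u hu n hn
  have hmiss := card_powersetCard_filter_mem (A \ s) u (mem_sdiff.2 ⟨hu, hus⟩) n hn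
  have hsplit := card_filter_add_card_filter_not (s := {V ∈ A.powersetCard n | u ∈ V})
    (fun V => (V ∩ s).Nonempty)
  have heq : {V ∈ {V ∈ A.powersetCard n | u ∈ V} | ¬ (V ∩ s).Nonempty} =
      {V ∈ (A \ s).powersetCard n | u ∈ V} := by
    ext V
    simp only [mem_filter, mem_powersetCard, not_nonempty_iff_eq_empty, subset_sdiff,
      disjoint_iff_inter_eq_empty]
    tauto
  rw [heq, hall, hmiss, filter_filter, card_sdiff_of_subset hs, Nat.sub_right_comm] at hsplit
  omega

/-- The balls-into-urns problem (p1): urns are the `S`-element subsets `V` of `[K]` with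
`u ∈ V` and `V ∩ 𝒰 ≠ ∅`, ball colors are the elements `k ∈ 𝒰`, each color has
`N = C(K−1,S−1) − C(K−1−U,S−1)` balls, a ball of color `k` may only go into an urn `V`
with `k ∈ V`, and every urn receives exactly `U` balls. -/
theorem balls_into_urns (K S U : ℕ) (hS : 2 ≤ S) (hSK : S ≤ K)
    (hU : 1 ≤ U) (hUK : U ≤ K - 1)
    (𝒰 : Finset ℕ) (h𝒰 : 𝒰 ⊆ Finset.Icc 1 K) (h𝒰card : 𝒰.card = U)
    (u : ℕ) (hu : u ∈ Finset.Icc 1 K) (hu𝒰 : u ∉ 𝒰) :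
    ∃ x : Finset ℕ → ℕ → ℕ,
      (∀ V ∈ (((Finset.Icc 1 K).powersetCard S).filter
          (fun V => u ∈ V ∧ (V ∩ 𝒰).Nonempty)), ∀ k ∈ 𝒰, k ∉ V → x V k = 0) ∧
      (∀ k ∈ 𝒰, ∑ V ∈ (((Finset.Icc 1 K).powersetCard S).filter
          (fun V => u ∈ V ∧ (V ∩ 𝒰).Nonempty)), x V k =
            (K - 1).choose (S - 1) - (K - 1 - U).choose (S - 1)) ∧
      (∀ V ∈ (((Finset.Icc 1 K).powersetCard S).filter
          (fun V => u ∈ V ∧ (V ∩ 𝒰).Nonempty)), ∑ k ∈ 𝒰, x V k = U) := by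
  have hcard := card_powersetCard_filter_mem_inter_nonempty (Icc 1 K) 𝒰 h𝒰 u hu hu𝒰 S (by omega)
  rw [Nat.card_Icc, Nat.add_sub_cancel, h𝒰card] at hcard
  have hne : 𝒰.Nonempty := card_pos.1 (by omega)
  rw [← hcard, ← h𝒰card]
  refine exists_balanced_assignment 𝒰 hne _ (fun V hV => (mem_filter.1 hV).2.2) ?_
  intro σ hfix hmaps V hV
  simp only [mem_filter, mem_powersetCard] at hV ⊢
  obtain ⟨⟨hsub, hVcard⟩, huV, a, ha⟩ := hV
  rw [mem_inter] at ha
  refine ⟨⟨?_, by rw [card_map, hVcard]⟩, ?_, σ a, ?_⟩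
  · intro b hb
    obtain ⟨c, hc, rfl⟩ := mem_map.1 hb
    by_cases hcs : c ∈ 𝒰
    · exact h𝒰 (hmaps c hcs)
    · have h := hfix c hcs
      exact h.symm ▸ hsub hc
  · exact mem_map.2 ⟨u, huV, hfix u hu𝒰⟩
  · exact mem_inter.2 ⟨mem_map_of_mem _ ha.1, hmaps a ha.2⟩
end

section
/- Let W, X, Z be random variables such that W and Z are independent, I[X : W] = 0, and H[W | (X, Z)] = 0. Then I[X : Z | W] ≥ H[W]. -/
open MeasureTheory ProbabilityTheory

/-- Shannon entropy `H[X]` of a random variable `X` valued in a finite type. -/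
noncomputable def entropy {Ω S : Type*} [MeasurableSpace Ω] [Fintype S] [MeasurableSpace S]
    (μ : Measure Ω) (X : Ω → S) : ℝ :=
  ∑ s : S, Real.negMulLog ((μ.map X) {s}).toReal

/-- Conditional entropy `H[X | Y] = H[(X, Y)] − H[Y]`. -/
noncomputable def condEntropy {Ω S T : Type*} [MeasurableSpace Ω]
    [Fintype S] [MeasurableSpace S] [Fintype T] [MeasurableSpace T]
    (μ : Measure Ω) (X : Ω → S) (Y : Ω → T) : ℝ :=
  entropy μ (fun ω => (X ω, Y ω)) - entropy μ Y

/-- Mutual information `I[X : Y] = H[X] + H[Y] − H[(X, Y)]`. -/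
noncomputable def mutualInfo {Ω S T : Type*} [MeasurableSpace Ω]
    [Fintype S] [MeasurableSpace S] [Fintype T] [MeasurableSpace T]
    (μ : Measure Ω) (X : Ω → S) (Y : Ω → T) : ℝ :=
  entropy μ X + entropy μ Y - entropy μ (fun ω => (X ω, Y ω))

/-- Conditional mutual information
`I[X : Y | Z] = H[(X, Z)] + H[(Y, Z)] − H[(X, Y, Z)] − H[Z]`. -/
noncomputable def condMutualInfo {Ω S T U : Type*} [MeasurableSpace Ω]
    [Fintype S] [MeasurableSpace S] [Fintype T] [MeasurableSpace T]
    [Fintype U] [MeasurableSpace U]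
    (μ : Measure Ω) (X : Ω → S) (Y : Ω → T) (Z : Ω → U) : ℝ :=
  entropy μ (fun ω => (X ω, Z ω)) + entropy μ (fun ω => (Y ω, Z ω)) -
    entropy μ (fun ω => (X ω, Y ω, Z ω)) - entropy μ Z

/-- Entropy is unchanged by relabelling the values along a measurable bijection. -/
lemma entropy_equiv_comp {Ω S T : Type*} [MeasurableSpace Ω]
    [Fintype S] [MeasurableSpace S] [MeasurableSingletonClass S]
    [Fintype T] [MeasurableSpace T] [MeasurableSingletonClass T]
    (μ : Measure Ω) {X : Ω → S} (hX : Measurable X) (e : S ≃ T) :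
    entropy μ (fun ω => e (X ω)) = entropy μ X := by
  have he : Measurable fun ω => e (X ω) := (measurable_of_finite e).comp hX
  unfold entropy
  rw [← Equiv.sum_comp e]
  refine Finset.sum_congr rfl fun s _ => ?_
  rw [Measure.map_apply he (measurableSet_singleton _),
    Measure.map_apply hX (measurableSet_singleton _)]
  congr 3
  ext ω
  simp

/-- The law of the first coordinate is the marginal of the joint law. -/
lemma sum_map_prodMk_singleton_right {Ω S T : Type*} [MeasurableSpace Ω]
    [MeasurableSpace S] [MeasurableSingletonClass S]
    [Fintype T] [MeasurableSpace T] [MeasurableSingletonClass T]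
    (μ : Measure Ω) [IsFiniteMeasure μ] {X : Ω → S} {Y : Ω → T}
    (hX : Measurable X) (hY : Measurable Y) (s : S) :
    ∑ t, (μ.map (fun ω => (X ω, Y ω)) {(s, t)}).toReal = (μ.map X {s}).toReal := by
  rw [← ENNReal.toReal_sum fun t _ => measure_ne_top _ _,
    Measure.map_apply hX (measurableSet_singleton _)]
  simp_rw [Measure.map_apply (hX.prodMk hY) (measurableSet_singleton _)]
  rw [← measure_biUnion_finset]
  · congr 2
    ext ω
    simp
  · intro t _ t' _ h
    refine Set.disjoint_left.2 fun ω h₁ h₂ => h ?_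
    simp only [Set.mem_preimage, Set.mem_singleton_iff, Prod.mk.injEq] at h₁ h₂
    exact h₁.2.symm.trans h₂.2
  · exact fun t _ => hX.prodMk hY (measurableSet_singleton _)

/-- The law of the second coordinate is the marginal of the joint law. -/
lemma sum_map_prodMk_singleton_left {Ω S T : Type*} [MeasurableSpace Ω]
    [Fintype S] [MeasurableSpace S] [MeasurableSingletonClass S]
    [MeasurableSpace T] [MeasurableSingletonClass T]
    (μ : Measure Ω) [IsFiniteMeasure μ] {X : Ω → S} {Y : Ω → T}
    (hX : Measurable X) (hY : Measurable Y) (t : T) :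
    ∑ s, (μ.map (fun ω => (X ω, Y ω)) {(s, t)}).toReal = (μ.map Y {t}).toReal := by
  rw [← sum_map_prodMk_singleton_right μ hY hX t]
  refine Finset.sum_congr rfl fun s _ => ?_
  rw [Measure.map_apply (hX.prodMk hY) (measurableSet_singleton _),
    Measure.map_apply (hY.prodMk hX) (measurableSet_singleton _)]
  congr 2
  ext ω
  simp [and_comm]

/-- The point masses of the law of a finitely valued random variable add up to one. -/
lemma sum_map_singleton_eq_one {Ω S : Type*} [MeasurableSpace Ω]
    [Fintype S] [MeasurableSpace S] [MeasurableSingletonClass S]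
    (μ : Measure Ω) [IsProbabilityMeasure μ] {X : Ω → S} (hX : Measurable X) :
    ∑ s, (μ.map X {s}).toReal = 1 := by
  have := Measure.isProbabilityMeasure_map (μ := μ) hX.aemeasurable
  rw [← ENNReal.toReal_sum fun s _ => measure_ne_top _ _, sum_measure_singleton]
  simp

/-- Gibbs' inequality at a single point. -/
lemma negMulLog_le_neg_mul_log_add_sub {p a b : ℝ} (hp : 0 ≤ p) (hpa : p ≤ a) (hpb : p ≤ b) :
    Real.negMulLog p ≤ -p * Real.log a + -p * Real.log b + (a * b - p) := by
  rcases hp.eq_or_lt with rfl | hp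
  · simpa using mul_nonneg hpa hpb
  have ha := hp.trans_le hpa
  have hb := hp.trans_le hpb
  have h := Real.log_le_sub_one_of_pos (div_pos (mul_pos ha hb) hp)
  rw [Real.log_div (mul_pos ha hb).ne' hp.ne', Real.log_mul ha.ne' hb.ne'] at h
  have h' := mul_le_mul_of_nonneg_left h hp.le
  have hcancel : p * (a * b / p - 1) = a * b - p := by field_simp
  rw [hcancel] at h'
  unfold Real.negMulLog
  linarith

/-- Subadditivity of entropy. -/
lemma entropy_prodMk_le {Ω S T : Type*} [MeasurableSpace Ω]
    [Fintype S] [MeasurableSpace S] [MeasurableSingletonClass S]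
    [Fintype T] [MeasurableSpace T] [MeasurableSingletonClass T]
    (μ : Measure Ω) [IsProbabilityMeasure μ] {X : Ω → S} {Y : Ω → T}
    (hX : Measurable X) (hY : Measurable Y) :
    entropy μ (fun ω => (X ω, Y ω)) ≤ entropy μ X + entropy μ Y := by
  have hright := sum_map_prodMk_singleton_right μ hX hY
  have hleft := sum_map_prodMk_singleton_left μ hX hY
  have hsumX := sum_map_singleton_eq_one μ hX
  have hsumY := sum_map_singleton_eq_one μ hY
  unfold entropy
  rw [Fintype.sum_prod_type]
  set p : S → T → ℝ := fun s t => (μ.map (fun ω => (X ω, Y ω)) {(s, t)}).toReal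
  set a : S → ℝ := fun s => (μ.map X {s}).toReal
  set b : T → ℝ := fun t => (μ.map Y {t}).toReal
  change ∀ s, ∑ t, p s t = a s at hright
  change ∀ t, ∑ s, p s t = b t at hleft
  change ∑ s, a s = 1 at hsumX
  change ∑ t, b t = 1 at hsumY
  change ∑ s, ∑ t, Real.negMulLog (p s t)
    ≤ ∑ s, Real.negMulLog (a s) + ∑ t, Real.negMulLog (b t)
  have hp : ∀ s t, 0 ≤ p s t := fun _ _ => ENNReal.toReal_nonneg
  have hpa : ∀ s t, p s t ≤ a s := fun s t =>
    hright s ▸ Finset.single_le_sum (fun t _ => hp s t) (Finset.mem_univ t)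
  have hpb : ∀ s t, p s t ≤ b t := fun s t =>
    hleft t ▸ Finset.single_le_sum (fun s _ => hp s t) (Finset.mem_univ s)
  calc ∑ s, ∑ t, Real.negMulLog (p s t)
      ≤ ∑ s, ∑ t, (-p s t * Real.log (a s) + -p s t * Real.log (b t) + (a s * b t - p s t)) :=
        Finset.sum_le_sum fun s _ => Finset.sum_le_sum fun t _ =>
          negMulLog_le_neg_mul_log_add_sub (hp s t) (hpa s t) (hpb s t)
    _ = ∑ s, ∑ t, -p s t * Real.log (a s) + ∑ t, ∑ s, -p s t * Real.log (b t)
          + ((∑ s, a s) * ∑ t, b t - ∑ s, ∑ t, p s t) := by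
        rw [Finset.sum_comm (f := fun t s => -p s t * Real.log (b t)), Finset.sum_mul_sum]
        simp only [Finset.sum_add_distrib, Finset.sum_sub_distrib]
    _ = ∑ s, Real.negMulLog (a s) + ∑ t, Real.negMulLog (b t) := by
        simp only [← Finset.sum_mul, Finset.sum_neg_distrib, hright, hleft, hsumX, hsumY]
        simp [Real.negMulLog]

/-- Entropy is additive on independent random variables. -/
lemma entropy_prodMk_eq_add_of_indepFun {Ω S T : Type*} [MeasurableSpace Ω]
    [Fintype S] [MeasurableSpace S] [MeasurableSingletonClass S]
    [Fintype T] [MeasurableSpace T] [MeasurableSingletonClass T]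
    (μ : Measure Ω) [IsProbabilityMeasure μ] {X : Ω → S} {Y : Ω → T}
    (hX : Measurable X) (hY : Measurable Y) (h : IndepFun X Y μ) :
    entropy μ (fun ω => (X ω, Y ω)) = entropy μ X + entropy μ Y := by
  have hmul : ∀ s t, (μ.map (fun ω => (X ω, Y ω)) {(s, t)}).toReal
      = (μ.map X {s}).toReal * (μ.map Y {t}).toReal := by
    intro s t
    rw [Measure.map_apply (hX.prodMk hY) (measurableSet_singleton _),
      Measure.map_apply hX (measurableSet_singleton _),
      Measure.map_apply hY (measurableSet_singleton _), ← ENNReal.toReal_mul,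
      ← h.measure_inter_preimage_eq_mul _ _ (measurableSet_singleton _)
        (measurableSet_singleton _)]
    congr 2
    ext ω
    simp
  unfold entropy
  rw [Fintype.sum_prod_type]
  simp only [hmul, Real.negMulLog_mul, Finset.sum_add_distrib, ← Finset.sum_mul,
    ← Finset.mul_sum, sum_map_singleton_eq_one μ hX, sum_map_singleton_eq_one μ hY, one_mul]

/-- If `W` and `Z` are independent, `I[X : W] = 0` and `H[W | (X, Z)] = 0`, then
`I[X : Z | W] ≥ H[W]`. -/
theorem condMutualInfo_ge_entropy
    {Ω A B C : Type*} [MeasurableSpace Ω] (μ : Measure Ω) [IsProbabilityMeasure μ]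
    [Fintype A] [MeasurableSpace A] [MeasurableSingletonClass A]
    [Fintype B] [MeasurableSpace B] [MeasurableSingletonClass B]
    [Fintype C] [MeasurableSpace C] [MeasurableSingletonClass C]
    (W : Ω → A) (X : Ω → B) (Z : Ω → C)
    (hW : Measurable W) (hX : Measurable X) (hZ : Measurable Z)
    (hWZ : IndepFun W Z μ)
    (hsec : mutualInfo μ X W = 0)
    (hdec : condEntropy μ W (fun ω => (X ω, Z ω)) = 0) :
    condMutualInfo μ X Z W ≥ entropy μ W := by
  have hZW : entropy μ (fun ω => (Z ω, W ω)) = entropy μ Z + entropy μ W :=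
    entropy_prodMk_eq_add_of_indepFun μ hZ hW hWZ.symm
  have hXZW : entropy μ (fun ω => (X ω, Z ω, W ω)) = entropy μ (fun ω => (W ω, X ω, Z ω)) :=
    entropy_equiv_comp μ (hW.prodMk (hX.prodMk hZ))
      ((Equiv.prodComm A (B × C)).trans (Equiv.prodAssoc B C A))
  have hXZ := entropy_prodMk_le μ hX hZ
  unfold mutualInfo at hsec
  unfold condEntropy at hdec
  unfold condMutualInfo
  linarith
end
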